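/- arXiv:1603.09490 — 6 statements merged into one kernel-verified Lean document; each statement's English description precedes it below -/
import Mathlib

section
/- Let F : ℤ → ℝ be decreasing and strictly convex in the discrete sense. Then there exists a function f̄ : ℝ → ℝ that is continuous, strictly convex on ℝ, and extends F, i.e., f̄(x) = F(x) for every x ∈ ℤ. -/
/-!
Write `d n = F (n + 1) - F n`. On each interval `[n, n + 1)` the affine interpolation of `F` is
bent into a parabola: with `t = x - n`,
`f x = F n + d n * t - c n * t * (1 - t)`, where `c n > 0` is half of the smaller of the two gaps
`d n - d (n - 1)` and `d (n + 1) - d n`. The slope of this piece runs from `d n - c n` to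
`d n + c n`, and the choice of `c` gives `d n + c n ≤ d m - c m` whenever `n < m`, so slopes
increase across integers too. Consequently the tangent to the parabola at any `x` lies strictly
below the graph of `f` away from `x` (`tangent_lt_bend`): inside the same interval the difference
is `c n * (y - x) ^ 2`, and in the other intervals the tangent is compared with `F` at the integers
and then with the end slopes of the piece. A function with strict supporting lines at every point
is strictly convex, and a convex function on `ℝ` is continuous.
-/

/-- The extension of `F` which on `[n, n + 1)` is the parabola through `(n, F n)` and
`(n + 1, F (n + 1))` with leading coefficient `c n`. -/
noncomputable def bend (F : ℤ → ℝ) (c : ℤ → ℝ) (x : ℝ) : ℝ :=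
  F ⌊x⌋ + (F (⌊x⌋ + 1) - F ⌊x⌋) * Int.fract x - c ⌊x⌋ * (Int.fract x * (1 - Int.fract x))

/-- The right derivative of `bend F c`. -/
noncomputable def bendSlope (F : ℤ → ℝ) (c : ℤ → ℝ) (x : ℝ) : ℝ :=
  (F (⌊x⌋ + 1) - F ⌊x⌋) + c ⌊x⌋ * (2 * Int.fract x - 1)

lemma add_slope_mul_le_of_le {F : ℤ → ℝ} {m : ℝ} {a : ℤ}
    (h : ∀ k, a ≤ k → m ≤ F (k + 1) - F k) (k : ℤ) (hk : a ≤ k) :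
    F a + m * ((k : ℝ) - a) ≤ F k := by
  induction k, hk using Int.leInduction with
  | base => simp
  | succ k hk ih =>
    have := h k hk
    push_cast
    linarith

lemma add_slope_mul_le_of_ge {F : ℤ → ℝ} {m : ℝ} {a : ℤ}
    (h : ∀ k, k < a → F (k + 1) - F k ≤ m) (k : ℤ) (hk : k ≤ a) :
    F a + m * ((k : ℝ) - a) ≤ F k := by
  induction k, hk using Int.leInductionDown with
  | base => simp
  | pred k hk ih =>
    have := h (k - 1) (by lia)
    rw [sub_add_cancel] at this
    push_cast
    linarith

/-- The tangent line at `x` strictly supports the graph of `bend F c`. -/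
lemma tangent_lt_bend {F c : ℤ → ℝ} (hc : ∀ n, 0 < c n)
    (hgap : ∀ n m, n < m → (F (n + 1) - F n) + c n ≤ (F (m + 1) - F m) - c m)
    {x y : ℝ} (hxy : y ≠ x) :
    bend F c x + bendSlope F c x * (y - x) < bend F c y := by
  have ex := Int.floor_add_fract x
  have ey := Int.floor_add_fract y
  have hs0 := Int.fract_nonneg x
  have hs1 := Int.fract_lt_one x
  have ht0 := Int.fract_nonneg y
  have ht1 := Int.fract_lt_one y
  unfold bend
  set m := bendSlope F c x with hm
  unfold bendSlope at hm
  generalize Int.fract x = s at *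
  generalize Int.fract y = t at *
  generalize ⌊x⌋ = n at *
  generalize ⌊y⌋ = k at *
  have hcn := hc n
  have hck := hc k
  have hm1 : m ≤ (F (n + 1) - F n) + c n := by nlinarith
  have hm2 : (F (n + 1) - F n) - c n ≤ m := by nlinarith
  subst ex ey
  rcases lt_trichotomy k n with h | rfl | h
  · have key := add_slope_mul_le_of_ge (F := F) (m := m) (a := n)
      (fun j hj => by linarith [hgap j n hj, hc j]) (k + 1) (by lia)
    have hg := hgap k n h
    push_cast at key
    -- `F n` lies above the tangent at `x`
    have h1 : F n + (F (n + 1) - F n) * s - c n * (s * (1 - s)) - m * s ≤ F n := by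
      rw [hm]; nlinarith [mul_nonneg hcn.le (sq_nonneg s)]
    nlinarith [mul_pos hck (pow_pos (sub_pos.2 ht1) 2),
      mul_nonneg (sub_nonneg.2 (hg.trans hm2)) (sub_pos.2 ht1).le]
  · have hst : t - s ≠ 0 := fun h0 => hxy (by linarith)
    have := mul_pos hcn (pow_pos (abs_pos.2 hst) 2)
    rw [sq_abs] at this
    rw [hm]
    nlinarith
  · have key := add_slope_mul_le_of_le (F := F) (m := m) (a := n + 1)
      (fun j hj => by linarith [hgap n j (by lia), hc j]) k (by lia)
    have hg := hgap n k h
    push_cast at key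
    -- `F (n + 1)` lies strictly above the tangent at `x`, since `x < n + 1`
    have h1 : F n + (F (n + 1) - F n) * s - c n * (s * (1 - s)) + m * (1 - s) < F (n + 1) := by
      rw [hm]; nlinarith [mul_pos hcn (pow_pos (sub_pos.2 hs1) 2)]
    nlinarith [mul_nonneg hck.le (sq_nonneg t),
      mul_nonneg (sub_nonneg.2 (hm1.trans hg)) ht0]

/-- A decreasing, discretely strictly convex `F : ℤ → ℝ` admits a continuous,
strictly convex extension `f̄ : ℝ → ℝ` with `f̄(x) = F(x)` for all `x ∈ ℤ`. -/
theorem stmt_2 (F : ℤ → ℝ)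
    (hdec : ∀ x : ℤ, F (x + 1) < F x)
    (hconv : StrictMono fun x : ℤ => F (x + 1) - F x) :
    ∃ fbar : ℝ → ℝ, Continuous fbar ∧ StrictConvexOn ℝ Set.univ fbar ∧
      ∀ x : ℤ, fbar (x : ℝ) = F x := by
  obtain ⟨d, hd⟩ : ∃ d : ℤ → ℝ, d = fun x : ℤ => F (x + 1) - F x := ⟨_, rfl⟩
  rw [← hd] at hconv
  have hdn : ∀ n, F (n + 1) - F n = d n := fun n => by rw [hd]
  let c : ℤ → ℝ := fun n => min (d n - d (n - 1)) (d (n + 1) - d n) / 2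
  have hc : ∀ n, 0 < c n := fun n =>
    half_pos (lt_min (sub_pos.2 (hconv (by lia))) (sub_pos.2 (hconv (by lia))))
  have hgap : ∀ n m, n < m → (F (n + 1) - F n) + c n ≤ (F (m + 1) - F m) - c m := by
    intro n m hnm
    rw [hdn, hdn]
    have h1 : c n ≤ (d (n + 1) - d n) / 2 :=
      div_le_div_of_nonneg_right (min_le_right _ _) two_pos.le
    have h2 : c m ≤ (d m - d (m - 1)) / 2 :=
      div_le_div_of_nonneg_right (min_le_left _ _) two_pos.le
    have h3 : d n ≤ d (m - 1) := hconv.monotone (by lia)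
    have h4 : d (n + 1) ≤ d m := hconv.monotone (by lia)
    linarith
  have hsc : StrictConvexOn ℝ Set.univ (bend F c) := by
    refine strictConvexOn_of_slope_strict_mono_adjacent convex_univ ?_
    intro x y z _ _ hxy hyz
    have h1 := tangent_lt_bend hc hgap hxy.ne
    have h2 := tangent_lt_bend hc hgap hyz.ne.symm
    -- the slope of the tangent at `y` separates the two difference quotients
    trans bendSlope F c y
    · rw [div_lt_iff₀ (sub_pos.2 hxy)]
      linarith
    · rw [lt_div_iff₀ (sub_pos.2 hyz)]
      linarith
  refine ⟨bend F c, ?_, hsc, fun x => by simp [bend]⟩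
  exact continuousOn_univ.1 (hsc.convexOn.continuousOn isOpen_univ)
end

section
/- Let F : ℤ → ℝ and let f̄ : ℝ → ℝ be a convex function extending F (f̄(m) = F(m) for all m ∈ ℤ). Let x, y ∈ ℝ be such that n := ⌊y⌋ − ⌊x⌋ ≠ 0. Then Δₙ F(⌊x⌋)/n ≤ (f̄(y) − f̄(x))/(y − x) ≤ Δₙ F(⌊x⌋ + 1)/n. -/
/-!
The slope `(f b - f a) / (b - a)` of a chord of a convex function is monotone in both endpoints
(`ConvexOn.chord_slope_mono`). Since `⌊x⌋ ≤ x ≤ ⌊x⌋ + 1` and `⌊y⌋ ≤ y ≤ ⌊y⌋ + 1`, the chord over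
`x, y` lies between the chords over `⌊x⌋, ⌊y⌋` and over `⌊x⌋ + 1, ⌊y⌋ + 1`, whose slopes are the
two quotients of forward differences of `F`.
-/

/-- Chord slopes of a convex function are monotone in both endpoints jointly, whatever the order of
the endpoints. -/
theorem ConvexOn.chord_slope_mono {f : ℝ → ℝ} (hf : ConvexOn ℝ Set.univ f) {a b a' b' : ℝ}
    (ha : a ≤ a') (hb : b ≤ b') (hab : a ≠ b) (hab' : a' ≠ b') :
    (f b - f a) / (b - a) ≤ (f b' - f a') / (b' - a') := by
  have swap : ∀ u v : ℝ, (f u - f v) / (u - v) = (f v - f u) / (v - u) := fun u v => by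
    rw [← neg_div_neg_eq, neg_sub, neg_sub]
  -- The endpoints are moved one at a time, the larger one first, so that they never coincide.
  rcases lt_or_gt_of_ne hab with h | h
  · have hne : b' ≠ a := (h.trans_le hb).ne'
    calc (f b - f a) / (b - a) ≤ (f b' - f a) / (b' - a) :=
          hf.secant_mono trivial trivial trivial h.ne' hne hb
      _ = (f a - f b') / (a - b') := swap _ _
      _ ≤ (f a' - f b') / (a' - b') :=
          hf.secant_mono trivial trivial trivial hne.symm hab' ha
      _ = _ := swap _ _
  · have hne : a' ≠ b := (lt_of_lt_of_le h ha).ne'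
    calc (f b - f a) / (b - a) = (f a - f b) / (a - b) := swap _ _
      _ ≤ (f a' - f b) / (a' - b) :=
          hf.secant_mono trivial trivial trivial hab hne ha
      _ = (f b - f a') / (b - a') := swap _ _
      _ ≤ (f b' - f a') / (b' - a') :=
          hf.secant_mono trivial trivial trivial hne.symm hab'.symm hb

/-- For a convex extension `f̄` of `F : ℤ → ℝ`, and reals `x, y` with
`n = ⌊y⌋ − ⌊x⌋ ≠ 0`, the difference quotient of `f̄` between `x` and `y` is
sandwiched between `Δₙ F(⌊x⌋)/n` and `Δₙ F(⌊x⌋+1)/n`. -/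
theorem stmt_7 (F : ℤ → ℝ) (fbar : ℝ → ℝ)
    (hconv : ConvexOn ℝ Set.univ fbar)
    (hext : ∀ m : ℤ, fbar (m : ℝ) = F m)
    (x y : ℝ) (n : ℤ) (hn : n = ⌊y⌋ - ⌊x⌋) (hn0 : n ≠ 0) :
    (F (⌊x⌋ + n) - F ⌊x⌋) / (n : ℝ) ≤ (fbar y - fbar x) / (y - x) ∧
    (fbar y - fbar x) / (y - x) ≤ (F (⌊x⌋ + 1 + n) - F (⌊x⌋ + 1)) / (n : ℝ) := by
  have hfl : ⌊x⌋ ≠ ⌊y⌋ := fun h => hn0 (by omega)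
  have hxy : x ≠ y := fun h => hfl (by rw [h])
  have hy1 : ⌊x⌋ + n = ⌊y⌋ := by omega
  have hy2 : ⌊x⌋ + 1 + n = ⌊y⌋ + 1 := by omega
  have hnR : (n : ℝ) = (⌊y⌋ : ℝ) - (⌊x⌋ : ℝ) := by rw [hn]; push_cast; ring
  have hnR' : (n : ℝ) = ((⌊y⌋ + 1 : ℤ) : ℝ) - ((⌊x⌋ + 1 : ℤ) : ℝ) := by rw [hn]; push_cast; ring
  constructor
  · rw [hy1, hnR, ← hext, ← hext]
    exact hconv.chord_slope_mono (Int.floor_le x) (Int.floor_le y) (by exact_mod_cast hfl) hxy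
  · rw [hy2, hnR', ← hext, ← hext]
    refine hconv.chord_slope_mono ?_ ?_ hxy ?_
    · push_cast
      exact (Int.lt_floor_add_one x).le
    · push_cast
      exact (Int.lt_floor_add_one y).le
    · exact_mod_cast fun h => hfl (by omega)
end

section
/- Fix an integer P ≥ 1 and a real K'. For p = 1, …, P let L_p : ℤ → ℝ be decreasing and strictly convex in the discrete sense, and let L̄_p : ℝ → ℝ be the piecewise linear interpolant L̄_p(t) := L_p(⌊t⌋) + (t − ⌊t⌋)·ΔL_p(⌊t⌋). Define L̄(θ) := ∑_{p=1}^P L̄_p(θ_p) and ḡ(θ)_p := ΔL_p(⌊θ_p⌋) − (1/P)·∑_{q=1}^P ΔL_q(⌊θ_q⌋). Then ḡ is a subgradient of L̄ over the hyperplane C := {θ ∈ ℝ^P : ∑_{p=1}^P θ_p = K'}: for all θ, θ' ∈ C, L̄(θ') − L̄(θ) ≥ ḡ(θ)ᵀ(θ' − θ). -/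
/-!
On the hyperplane, `∑ (θ'_p - θ_p) = 0`, so the averaged term of `ḡ`, which is the same in every
coordinate, contributes nothing to the inner product. The claim therefore splits into one inequality
per coordinate: the slope `ΔL_p(⌊t⌋)` is a subgradient at `t` of the interpolant of `L_p`
(`interp_subgradient`). This follows from the discrete tangent inequality at integers
(`discrete_tangent_le`), since the interpolant at `s` is a convex combination of the values at
`⌊s⌋` and `⌊s⌋ + 1` and the tangent line is affine.
-/

/-- A discretely convex sequence lies above each of its tangent lines. -/
lemma discrete_tangent_le (f : ℤ → ℝ) (hf : Monotone fun m : ℤ => f (m + 1) - f m) (a n : ℤ) :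
    f a + ((n : ℝ) - a) * (f (a + 1) - f a) ≤ f n := by
  rcases le_total a n with h | h
  · induction n, h using Int.leInduction with
    | base => simp
    | succ n hn ih =>
      have h1 : f (a + 1) - f a ≤ f (n + 1) - f n := hf hn
      push_cast
      linarith
  · induction n, h using Int.leInductionDown with
    | base => simp
    | pred n hn ih =>
      have h1 : f (n - 1 + 1) - f (n - 1) ≤ f (a + 1) - f a := hf (by lia)
      rw [sub_add_cancel] at h1
      push_cast
      linarith

/-- The slope of the piecewise linear interpolant on the cell `[⌊t⌋, ⌊t⌋ + 1)` is a subgradient of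
the interpolant at `t`. -/
lemma interp_subgradient (f : ℤ → ℝ) (hf : Monotone fun m : ℤ => f (m + 1) - f m) (t s : ℝ) :
    (f (⌊t⌋ + 1) - f ⌊t⌋) * (s - t) ≤
      (f ⌊s⌋ + (s - (⌊s⌋ : ℝ)) * (f (⌊s⌋ + 1) - f ⌊s⌋))
        - (f ⌊t⌋ + (t - (⌊t⌋ : ℝ)) * (f (⌊t⌋ + 1) - f ⌊t⌋)) := by
  have h0 := discrete_tangent_le f hf ⌊t⌋ ⌊s⌋
  have h1 := discrete_tangent_le f hf ⌊t⌋ (⌊s⌋ + 1)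
  push_cast at h1
  have hs0 : 0 ≤ s - (⌊s⌋ : ℝ) := sub_nonneg.2 (Int.floor_le s)
  have hs1 : 0 ≤ 1 - (s - (⌊s⌋ : ℝ)) := by linarith [Int.lt_floor_add_one s]
  -- Convex combination of the two tangent inequalities, with weights given by the
  -- fractional part of `s`.
  linarith [mul_le_mul_of_nonneg_left h0 hs1, mul_le_mul_of_nonneg_left h1 hs0]

/-- Subgradient property: with `L_p : ℤ → ℝ` decreasing and discretely
strictly convex, `L̄_p` their piecewise linear interpolants and
`L̄(θ) = ∑ L̄_p(θ_p)`, the vector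
`ḡ(θ)_p = ΔL_p(⌊θ_p⌋) − (1/P)∑_q ΔL_q(⌊θ_q⌋)` is a subgradient of `L̄` over
the hyperplane `C = {θ : ∑ θ_p = K'}`. -/
theorem stmt_10 (P : ℕ) (hP : 1 ≤ P) (K' : ℝ)
    (L : Fin P → ℤ → ℝ)
    (hdec : ∀ p (m : ℤ), L p (m + 1) < L p m)
    (hconv : ∀ p, StrictMono fun m : ℤ => L p (m + 1) - L p m)
    (Lbar : (Fin P → ℝ) → ℝ)
    (hLbar : Lbar = fun θ : Fin P → ℝ =>
      ∑ p, (L p ⌊θ p⌋ + (θ p - (⌊θ p⌋ : ℝ)) * (L p (⌊θ p⌋ + 1) - L p ⌊θ p⌋)))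
    (θ θ' : Fin P → ℝ)
    (hθ : ∑ p, θ p = K') (hθ' : ∑ p, θ' p = K') :
    ∑ p, ((L p (⌊θ p⌋ + 1) - L p ⌊θ p⌋)
          - (1 / (P : ℝ)) * ∑ q, (L q (⌊θ q⌋ + 1) - L q ⌊θ q⌋))
        * (θ' p - θ p)
      ≤ Lbar θ' - Lbar θ := by
  have hsum : ∑ p, (θ' p - θ p) = 0 := by
    rw [Finset.sum_sub_distrib, hθ, hθ', sub_self]
  subst hLbar
  simp only [sub_mul _ _ (θ' _ - θ _)]
  rw [Finset.sum_sub_distrib, ← Finset.mul_sum, hsum, mul_zero, sub_zero]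
  simp only [← Finset.sum_sub_distrib, ← sub_mul]
  exact Finset.sum_le_sum fun p _ => interp_subgradient (L p) (hconv p).monotone (θ p) (θ' p)
end

section
/- Fix an integer P ≥ 1 and a real K' > 0, and in ℝ^P let S := {θ : θ_p ≥ 0 for all p, ∑_{p=1}^P θ_p = K'}, with φ : ℝ^P → S the Euclidean projection onto S. Let L̄ : ℝ^P → ℝ be continuous and strictly convex with unique minimizer θ* over S. Let (Ω, ℱ, Pr) be a probability space with a filtration (ℱ_k)_{k≥0}, let (a_k)_{k≥0} be positive reals with ∑_{k} a_k = ∞ and ∑_{k} a_k² < ∞, let c > 0, and let (θ_k)_{k≥0} be an (ℱ_k)-adapted sequence of S-valued random vectors and (ĝ_k)_{k≥0} a sequence of ℱ_{k+1}-measurable integrable random vectors such that, for every k: (i) θ_{k+1} = φ(θ_k − a_k·ĝ_k) almost surely; (ii) ‖ĝ_k‖² ≤ c almost surely; (iii) almost surely, E[ĝ_k | ℱ_k]ᵀ(θ' − θ_k) ≤ L̄(θ') − L̄(θ_k) for all θ' ∈ S. Then θ_k converges to θ* in probability: for every δ > 0, lim_{k→∞} Pr(‖θ_k − θ*‖ >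 δ) = 0. -/
/-!
The proof only uses expectations. Put `D k = E‖θ k - θ*‖²` and `e k = E[L̄(θ k) - L̄(θ*)] ≥ 0`.
Projecting onto a convex set does not increase the distance to its points, so expanding the square
and pulling the `ℱ k`-measurable factor `θ k - θ*` out of the conditional expectation of `ĝ k`
yields `D (k+1) ≤ D k - 2 a k e k + c (a k)²` (`integral_step_le`).

Since `S` is compact and `θ*` is the unique minimizer, the squared distance to `θ*` is controlled by
the optimality gap up to an arbitrarily small error: for every `η > 0` there is `C` with
`‖x - θ*‖² ≤ η + C (L̄ x - L̄ θ*)` on `S` (`exists_dist_sq_le_gap`). Integrating,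
`D k ≤ η + C e k`.

These two facts force `D k → 0` (`tendsto_zero_of_recursion`): were `D` to stay above `ε`, the gaps
`e k` would be bounded below and the recursion would make `∑ a k` finite; so `D` is below `ε`
at arbitrarily late times, and from a late time on it can grow by at most the tail of `c ∑ (a k)²`.
Chebyshev's inequality turns `D k → 0` into convergence in probability.
-/

open MeasureTheory Filter

/-- Deterministic core of the argument: a nonnegative sequence that satisfies the Robbins–Monro
descent recursion with gaps `e`, and is controlled by these gaps up to small errors, tends to
zero. -/
theorem tendsto_zero_of_recursion (a D e : ℕ → ℝ) (c : ℝ) (hc : 0 < c)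
    (ha : ∀ k, 0 < a k) (hadiv : ¬ Summable a) (hasq : Summable fun k => (a k) ^ 2)
    (hD : ∀ k, 0 ≤ D k) (he : ∀ k, 0 ≤ e k)
    (hrec : ∀ k, D (k + 1) ≤ D k - 2 * a k * e k + c * (a k) ^ 2)
    (hgap : ∀ η : ℝ, 0 < η → ∃ C : ℝ, 0 < C ∧ ∀ k, D k ≤ η + C * e k) :
    Tendsto D atTop (nhds 0) := by
  rw [Metric.tendsto_atTop]
  intro ε hε
  have hsum : Summable fun k => c * (a k) ^ 2 := hasq.mul_left c
  obtain ⟨N, hN⟩ : ∃ N, ∀ n ≥ N, ∑' k, c * (a (k + n)) ^ 2 < ε / 2 := by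
    have h := tendsto_sum_nat_add fun k => c * (a k) ^ 2
    exact eventually_atTop.1 (h.eventually_lt_const (by positivity))
  have htail : ∀ k ≥ N, ∀ n, ∑ i ∈ Finset.range n, c * (a (i + k)) ^ 2 < ε / 2 := by
    intro k hk n
    refine lt_of_le_of_lt ?_ (hN k hk)
    exact ((summable_nat_add_iff k).2 hsum).sum_le_tsum _
      (fun i _ => mul_nonneg hc.le (sq_nonneg _))
  -- Otherwise the gaps stay bounded below and the recursion bounds the partial sums of `a`.
  obtain ⟨k, hk, hDk⟩ : ∃ k ≥ N, D k < ε / 2 := by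
    by_contra! hcon
    obtain ⟨C, hC, hCe⟩ := hgap (ε / 4) (by positivity)
    have hlow : ∀ k ≥ N, ε / (4 * C) ≤ e k := by
      intro k hk
      rw [div_le_iff₀ (by positivity)]
      nlinarith [hcon k hk, hCe k]
    have hpart : ∀ n, D (n + N) + (ε / (2 * C)) * ∑ i ∈ Finset.range n, a (i + N)
        ≤ D N + ∑ i ∈ Finset.range n, c * (a (i + N)) ^ 2 := by
      intro n
      induction n with
      | zero => simp
      | succ n ih =>
        rw [Finset.sum_range_succ, Finset.sum_range_succ]
        have h1 := hrec (n + N)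
        have h2 := mul_le_mul_of_nonneg_left (hlow (n + N) (by omega)) (ha (n + N)).le
        have h3 : ε / (2 * C) = 2 * (ε / (4 * C)) := by field_simp; norm_num
        rw [show n + 1 + N = n + N + 1 by ring]
        rw [h3] at ih ⊢
        linarith
    apply hadiv
    rw [← summable_nat_add_iff N]
    refine summable_of_sum_range_le (c := (D N + ε / 2) / (ε / (2 * C))) (fun n => (ha _).le) ?_
    intro n
    rw [le_div_iff₀ (by positivity)]
    linarith [hpart n, htail N le_rfl n, hD (n + N)]
  refine ⟨k, fun n hn => ?_⟩
  have hgrow : ∀ n, D (n + k) ≤ D k + ∑ i ∈ Finset.range n, c * (a (i + k)) ^ 2 := by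
    intro n
    induction n with
    | zero => simp
    | succ n ih =>
      rw [Finset.sum_range_succ, show n + 1 + k = n + k + 1 by ring]
      have h1 := hrec (n + k)
      have h2 := mul_nonneg (ha (n + k)).le (he (n + k))
      linarith
  obtain ⟨j, rfl⟩ := Nat.exists_eq_add_of_le' hn
  rw [Real.dist_eq, sub_zero, abs_of_nonneg (hD _)]
  linarith [hgrow j, htail k hk j]

/-- The squared distance to the unique minimizer over a compact set is bounded by a multiple of the
optimality gap, up to an arbitrarily small additive error. -/
theorem exists_dist_sq_le_gap {E : Type*} [NormedAddCommGroup E] {S : Set E} (hS : IsCompact S)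
    {L : E → ℝ} (hL : Continuous L) {x₀ : E} (hx₀ : ∀ x ∈ S, x ≠ x₀ → L x₀ < L x)
    (η : ℝ) (hη : 0 < η) :
    ∃ C : ℝ, 0 < C ∧ ∀ x ∈ S, ‖x - x₀‖ ^ 2 ≤ η + C * (L x - L x₀) := by
  have hcont : Continuous fun x : E => ‖x - x₀‖ ^ 2 := by fun_prop
  have hnn : ∀ x ∈ S, 0 ≤ L x - L x₀ := by
    intro x hx
    by_cases h : x = x₀
    · simp [h]
    · linarith [hx₀ x hx h]
  have hT : IsCompact (S ∩ {x | η ≤ ‖x - x₀‖ ^ 2}) :=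
    hS.inter_right (isClosed_le continuous_const hcont)
  rcases (S ∩ {x | η ≤ ‖x - x₀‖ ^ 2}).eq_empty_or_nonempty with hemp | hne
  · refine ⟨1, one_pos, fun x hx => ?_⟩
    have : ¬ η ≤ ‖x - x₀‖ ^ 2 := fun h => by
      have hmem : x ∈ S ∩ {x | η ≤ ‖x - x₀‖ ^ 2} := ⟨hx, h⟩
      simp [hemp] at hmem
    linarith [hnn x hx]
  · obtain ⟨y, hy, hymin⟩ := hT.exists_isMinOn hne hL.continuousOn
    obtain ⟨z, hz, hzmax⟩ := hT.exists_isMaxOn hne hcont.continuousOn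
    have hgap : 0 < L y - L x₀ := by
      refine sub_pos.2 (hx₀ y hy.1 ?_)
      rintro rfl
      have := hy.2
      simp at this
      linarith
    have hz0 : 0 < ‖z - x₀‖ ^ 2 := lt_of_lt_of_le hη hz.2
    refine ⟨‖z - x₀‖ ^ 2 / (L y - L x₀), by positivity, fun x hx => ?_⟩
    by_cases h : η ≤ ‖x - x₀‖ ^ 2
    · have h1 : ‖x - x₀‖ ^ 2 ≤ ‖z - x₀‖ ^ 2 := hzmax ⟨hx, h⟩
      have h2 : L y ≤ L x := hymin ⟨hx, h⟩
      have h3 : ‖z - x₀‖ ^ 2 ≤ ‖z - x₀‖ ^ 2 / (L y - L x₀) * (L x - L x₀) := by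
        rw [div_mul_eq_mul_div, le_div_iff₀ hgap]
        gcongr
      linarith
    · have := mul_nonneg (div_nonneg hz0.le hgap.le) (hnn x hx)
      linarith

/-- A nearest point of a convex set is no farther from the points of the set than the original
point. -/
theorem norm_nearest_sub_le {E : Type*} [NormedAddCommGroup E] [InnerProductSpace ℝ E] {S : Set E}
    (hS : Convex ℝ S) {v p s : E} (hp : p ∈ S) (hmin : ∀ x ∈ S, ‖v - p‖ ≤ ‖v - x‖) (hs : s ∈ S) :
    ‖p - s‖ ^ 2 ≤ ‖v - s‖ ^ 2 := by
  have hinf : ‖v - p‖ = ⨅ w : S, ‖v - w‖ := by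
    have : Nonempty S := ⟨⟨p, hp⟩⟩
    refine le_antisymm (le_ciInf fun w => hmin w w.2) ?_
    exact ciInf_le (f := fun w : S => ‖v - w‖)
      ⟨0, by rintro _ ⟨w, rfl⟩; exact norm_nonneg _⟩ ⟨p, hp⟩
  have hvar := (norm_eq_iInf_iff_real_inner_le_zero hS hp).1 hinf s hs
  have hexp := norm_sub_sq_real (v - p) (s - p)
  rw [sub_sub_sub_cancel_right, norm_sub_rev s p] at hexp
  nlinarith [sq_nonneg ‖v - p‖]

theorem simplex_convex (P : ℕ) (K : ℝ) :
    Convex ℝ {θ : EuclideanSpace ℝ (Fin P) | (∀ p, 0 ≤ θ p) ∧ ∑ p, θ p = K} := by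
  rintro x ⟨hx, hxs⟩ y ⟨hy, hys⟩ s t hs ht hst
  refine ⟨fun p => ?_, ?_⟩
  · have h1 := mul_nonneg hs (hx p)
    have h2 := mul_nonneg ht (hy p)
    simpa using add_nonneg h1 h2
  · simp [Finset.sum_add_distrib, ← Finset.mul_sum, hxs, hys, ← add_mul, hst]

theorem simplex_isCompact (P : ℕ) (K : ℝ) :
    IsCompact {θ : EuclideanSpace ℝ (Fin P) | (∀ p, 0 ≤ θ p) ∧ ∑ p, θ p = K} := by
  refine Metric.isCompact_of_isClosed_isBounded ?_ ?_
  · refine IsClosed.inter (s₁ := {θ : EuclideanSpace ℝ (Fin P) | ∀ p, 0 ≤ θ p})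
      (s₂ := {θ : EuclideanSpace ℝ (Fin P) | ∑ p, θ p = K}) ?_ ?_
    · simp only [Set.ofPred_forall]
      exact isClosed_iInter fun p => isClosed_le continuous_const (by fun_prop)
    · exact isClosed_eq (by fun_prop) continuous_const
  · refine isBounded_iff_forall_norm_le.2 ⟨|K|, ?_⟩
    rintro x ⟨hx, hxs⟩
    refine abs_le_of_sq_le_sq' ?_ (abs_nonneg K) |>.2
    rw [sq_abs, EuclideanSpace.real_norm_sq_eq, sq K]
    calc ∑ p, x p ^ 2 ≤ ∑ p, K * x p := by
          refine Finset.sum_le_sum fun p _ => ?_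
          rw [sq]
          refine mul_le_mul_of_nonneg_right ?_ (hx p)
          rw [← hxs]
          exact Finset.single_le_sum (fun q _ => hx q) (Finset.mem_univ p)
      _ = K * K := by rw [← Finset.mul_sum, hxs]

/-- Descent inequality, in expectation, for one step from `X` to `Y`. Here `Y` only has to be at
least as close to `x₀` as the unprojected step `X - a • g`, and `G` is any integrable lower bound
for the inner product of `X - x₀` with the conditional expectation of `g`; in the application it is
the optimality gap at `X`. -/
theorem integral_step_le {Ω E : Type*} {m m0 : MeasurableSpace Ω} (hm : m ≤ m0) {μ : Measure Ω}
    [IsProbabilityMeasure μ] [NormedAddCommGroup E] [InnerProductSpace ℝ E] [CompleteSpace E]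
    {X Y g : Ω → E} {G : Ω → ℝ} {x₀ : E} {a c R : ℝ} (ha : 0 < a)
    (hX : StronglyMeasurable[m] X) (hXR : ∀ ω, ‖X ω - x₀‖ ≤ R)
    (hYi : Integrable (fun ω => ‖Y ω - x₀‖ ^ 2) μ)
    (hXi : Integrable (fun ω => ‖X ω - x₀‖ ^ 2) μ)
    (hg : Integrable g μ) (hG : Integrable G μ)
    (hgc : ∀ᵐ ω ∂μ, ‖g ω‖ ^ 2 ≤ c)
    (hY : ∀ᵐ ω ∂μ, ‖Y ω - x₀‖ ^ 2 ≤ ‖X ω - a • g ω - x₀‖ ^ 2)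
    (hsub : ∀ᵐ ω ∂μ, G ω ≤ inner ℝ (X ω - x₀) ((μ[g|m]) ω)) :
    ∫ ω, ‖Y ω - x₀‖ ^ 2 ∂μ
      ≤ ∫ ω, ‖X ω - x₀‖ ^ 2 ∂μ - 2 * a * ∫ ω, G ω ∂μ + c * a ^ 2 := by
  have hZ : StronglyMeasurable[m] fun ω => X ω - x₀ := hX.sub stronglyMeasurable_const
  have hIi : Integrable (fun ω => inner ℝ (X ω - x₀) (g ω)) μ := by
    refine (hg.norm.const_mul R).mono'
      ((hZ.mono hm).aestronglyMeasurable.inner hg.aestronglyMeasurable) (ae_of_all _ fun ω => ?_)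
    exact (norm_inner_le_norm _ _).trans (by gcongr; exact hXR ω)
  have hpull : μ[fun ω => inner ℝ (X ω - x₀) (g ω)|m]
      =ᵐ[μ] fun ω => inner ℝ (X ω - x₀) ((μ[g|m]) ω) :=
    condExp_bilin_of_stronglyMeasurable_left (innerSL ℝ) hZ hIi hg
  have hGle : ∫ ω, G ω ∂μ ≤ ∫ ω, inner ℝ (X ω - x₀) (g ω) ∂μ := by
    rw [← integral_condExp hm (f := fun ω => inner ℝ (X ω - x₀) (g ω))]
    refine integral_mono_ae hG integrable_condExp ?_
    filter_upwards [hpull, hsub] with ω h1 h2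
    rwa [h1]
  have hi : Integrable (fun ω => ‖X ω - x₀‖ ^ 2 - 2 * a * inner ℝ (X ω - x₀) (g ω)) μ :=
    hXi.sub (hIi.const_mul _)
  have hle : ∫ ω, ‖Y ω - x₀‖ ^ 2 ∂μ
      ≤ ∫ ω, (‖X ω - x₀‖ ^ 2 - 2 * a * inner ℝ (X ω - x₀) (g ω) + c * a ^ 2) ∂μ := by
    refine integral_mono_ae hYi (hi.add (integrable_const _)) ?_
    filter_upwards [hgc, hY] with ω h1 h2
    refine h2.trans ?_
    rw [sub_right_comm, norm_sub_sq_real, inner_smul_right, norm_smul, mul_pow, Real.norm_eq_abs,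
      sq_abs]
    nlinarith [mul_le_mul_of_nonneg_left h1 (sq_nonneg a)]
  rw [integral_add hi (integrable_const _),
    integral_sub hXi (hIi.const_mul _), integral_const_mul, integral_const] at hle
  simp only [probReal_univ, one_smul] at hle
  have := mul_le_mul_of_nonneg_left hGle ha.le
  linarith

/-- Convergence of SDCP: under the Robbins–Monro step-size conditions, if each
update is a projected step along a uniformly bounded stochastic subgradient of
the continuous strictly convex `L̄` (with unique minimizer `θ*` over the
simplex `S`), then `θ_k → θ*` in probability. -/
theorem stmt_16 (P : ℕ) (hP : 1 ≤ P) (K' : ℝ) (hK' : 0 < K')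
    (S : Set (EuclideanSpace ℝ (Fin P)))
    (hS : S = {θ : EuclideanSpace ℝ (Fin P) | (∀ p, 0 ≤ θ p) ∧ ∑ p, θ p = K'})
    (φ : EuclideanSpace ℝ (Fin P) → EuclideanSpace ℝ (Fin P))
    (hφ : ∀ v, φ v ∈ S ∧ ∀ s ∈ S, ‖v - φ v‖ ≤ ‖v - s‖)
    (Lbar : EuclideanSpace ℝ (Fin P) → ℝ)
    (hLcont : Continuous Lbar)
    (hLconv : StrictConvexOn ℝ Set.univ Lbar)
    (θstar : EuclideanSpace ℝ (Fin P))
    (hθstar : θstar ∈ S ∧ ∀ ϑ ∈ S, ϑ ≠ θstar → Lbar θstar < Lbar ϑ)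
    {Ω : Type*} [m0 : MeasurableSpace Ω] (μ : Measure Ω) [IsProbabilityMeasure μ]
    (ℱ : Filtration ℕ m0)
    (a : ℕ → ℝ) (hapos : ∀ k, 0 < a k)
    (hadiv : ¬ Summable a)
    (hasq : Summable fun k => (a k) ^ 2)
    (c : ℝ) (hc : 0 < c)
    (θ : ℕ → Ω → EuclideanSpace ℝ (Fin P))
    (hθS : ∀ k ω, θ k ω ∈ S)
    (hθadapted : Adapted ℱ θ)
    (ghat : ℕ → Ω → EuclideanSpace ℝ (Fin P))
    (hghatmeas : ∀ k, StronglyMeasurable[ℱ (k + 1)] (ghat k))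
    (hghatint : ∀ k, Integrable (ghat k) μ)
    (hstep : ∀ k, ∀ᵐ ω ∂μ, θ (k + 1) ω = φ (θ k ω - a k • ghat k ω))
    (hbound : ∀ k, ∀ᵐ ω ∂μ, ‖ghat k ω‖ ^ 2 ≤ c)
    (hsub : ∀ k, ∀ᵐ ω ∂μ, ∀ θ' ∈ S,
      (∑ p, (μ[ghat k|ℱ k]) ω p * (θ' p - θ k ω p))
        ≤ Lbar θ' - Lbar (θ k ω)) :
    ∀ δ : ℝ, 0 < δ →
      Tendsto (fun k => μ {ω | δ < ‖θ k ω - θstar‖}) atTop (nhds 0) := by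
  intro δ hδ
  have hScomp : IsCompact S := hS ▸ simplex_isCompact P K'
  have hSconv : Convex ℝ S := hS ▸ simplex_convex P K'
  have hθm : ∀ k, Measurable (θ k) := fun k => (hθadapted k).mono (ℱ.le k) le_rfl
  -- A continuous function of `θ k` is bounded because `S` is compact, hence integrable.
  have hint : ∀ f : EuclideanSpace ℝ (Fin P) → ℝ, Continuous f →
      ∀ k, Integrable (fun ω => f (θ k ω)) μ := by
    intro f hf k
    obtain ⟨B, hB⟩ := hScomp.exists_bound_of_continuousOn hf.continuousOn
    exact Integrable.of_bound (hf.measurable.comp (hθm k)).aestronglyMeasurable B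
      (ae_of_all _ fun ω => hB _ (hθS k ω))
  obtain ⟨R, hR⟩ := hScomp.exists_bound_of_continuousOn
    (f := fun x => x - θstar) (by fun_prop)
  have hD2 := hint (fun x => ‖x - θstar‖ ^ 2) (by fun_prop)
  have hLi := hint (fun x => Lbar x - Lbar θstar) (by fun_prop)
  have hLnn : ∀ x ∈ S, 0 ≤ Lbar x - Lbar θstar := by
    intro x hx
    by_cases h : x = θstar
    · simp [h]
    · linarith [hθstar.2 x hx h]
  have hD : Tendsto (fun k => ∫ ω, ‖θ k ω - θstar‖ ^ 2 ∂μ) atTop (nhds 0) := by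
    refine tendsto_zero_of_recursion a _ (fun k => ∫ ω, (Lbar (θ k ω) - Lbar θstar) ∂μ) c hc
      hapos hadiv hasq (fun k => integral_nonneg fun ω => sq_nonneg _)
      (fun k => integral_nonneg fun ω => hLnn _ (hθS k ω)) (fun k => ?_) ?_
    · refine integral_step_le (ℱ.le k) (hapos k) (hθadapted k).stronglyMeasurable
        (fun ω => hR _ (hθS k ω)) (hD2 (k + 1)) (hD2 k) (hghatint k) (hLi k) (hbound k) ?_ ?_
      · filter_upwards [hstep k] with ω hω
        rw [hω]
        exact norm_nearest_sub_le hSconv (hφ _).1 (hφ _).2 hθstar.1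
      · filter_upwards [hsub k] with ω hω
        have h := hω θstar hθstar.1
        have heq : inner ℝ (θ k ω - θstar) ((μ[ghat k|ℱ k]) ω)
            = -∑ p, (μ[ghat k|ℱ k]) ω p * (θstar p - θ k ω p) := by
          rw [PiLp.inner_apply, ← Finset.sum_neg_distrib]
          refine Finset.sum_congr rfl fun p _ => ?_
          simp
          ring
        rw [heq]
        linarith
    · intro η hη
      obtain ⟨C, hC, hbd⟩ := exists_dist_sq_le_gap hScomp hLcont hθstar.2 η hη
      refine ⟨C, hC, fun k => ?_⟩
      have h := integral_mono (hD2 k) ((integrable_const η).add ((hLi k).const_mul C))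
        fun ω => hbd _ (hθS k ω)
      rw [integral_add' (integrable_const η) ((hLi k).const_mul C), integral_const_mul] at h
      simpa using h
  have hreal : Tendsto (fun k => μ.real {ω | δ < ‖θ k ω - θstar‖}) atTop (nhds 0) := by
    have hdiv := hD.div_const (δ ^ 2)
    rw [zero_div] at hdiv
    refine squeeze_zero (fun k => measureReal_nonneg) (fun k => ?_) hdiv
    rw [le_div_iff₀ (by positivity), mul_comm]
    refine le_trans ?_ (mul_meas_ge_le_integral_of_nonneg
      (ae_of_all _ fun ω => sq_nonneg ‖θ k ω - θstar‖) (hD2 k) (δ ^ 2))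
    refine mul_le_mul_of_nonneg_left (measureReal_mono ?_) (by positivity)
    intro ω (hω : δ < ‖θ k ω - θstar‖)
    exact pow_le_pow_left₀ hδ.le hω.le 2
  have h := ENNReal.tendsto_ofReal hreal
  simpa [ofReal_measureReal] using h
end

section
/- Fix an integer P ≥ 1, functions L_1, …, L_P : ℤ → ℝ each decreasing and strictly convex in the discrete sense, and integers 0 ≤ K' ≤ K. Suppose θ̂ ∈ ℤ^P minimizes ∑_{p=1}^P L_p(θ_p) over {θ ∈ ℤ^P : θ_p ≥ 0 for all p, ∑_{p=1}^P θ_p ≤ K'}. Then there exists θ^OPT ∈ ℤ^P minimizing ∑_{p=1}^P L_p(θ_p) over {θ ∈ ℤ^P : θ_p ≥ 0 for all p, ∑_{p=1}^P θ_p ≤ K} such that θ^OPT_p ≥ θ̂_p for every p and ∑_{p=1}^P (θ^OPT_p − θ̂_p) ≤ K − K'; in particular ‖θ^OPT − θ̂‖_∞ ≤ K − K'. -/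
/-!
The proof is the greedy argument. If `θ` is optimal for budget `B`, add one slot at an index `q`
whose marginal `ΔL_q(θ_q)` is smallest; the result is optimal for budget `B + 1`
(`optimal_add_slot`). Indeed, let `φ` be a competitor for `B + 1`. If `φ_p > θ_p` for some `p`,
removing a slot from `φ` at `p` gives a competitor for `B`, and by convexity the marginal of the
removed slot is `ΔL_p(φ_p - 1) ≥ ΔL_p(θ_p) ≥ ΔL_q(θ_q)`. Otherwise `φ ≤ θ`, and `φ` is no better than `θ` because
each `L_p` is decreasing. Iterating `K - K'` times from `θ̂` adds exactly `K - K'` slots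
(`exists_optimal_above`).
-/

/-- `θ` minimizes `∑ L_p(θ_p)` over the nonnegative integer vectors of total at most `B`. -/
def IsOptimalAlloc {P : ℕ} (L : Fin P → ℤ → ℝ) (B : ℤ) (θ : Fin P → ℤ) : Prop :=
  ((∀ p, 0 ≤ θ p) ∧ ∑ p, θ p ≤ B) ∧
    ∀ φ : Fin P → ℤ, (∀ p, 0 ≤ φ p) → (∑ p, φ p ≤ B) → ∑ p, L p (θ p) ≤ ∑ p, L p (φ p)

lemma sum_update_slot {P : ℕ} (θ : Fin P → ℤ) (q : Fin P) (c : ℤ) :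
    ∑ p, Function.update θ q c p = ∑ p, θ p + (c - θ q) := by
  rw [Finset.sum_update_of_mem (Finset.mem_univ q),
    ← Finset.add_sum_erase Finset.univ θ (Finset.mem_univ q), Finset.sdiff_singleton_eq_erase]
  ring

lemma sum_cost_update_slot {P : ℕ} (L : Fin P → ℤ → ℝ) (θ : Fin P → ℤ) (q : Fin P) (c : ℤ) :
    ∑ p, L p (Function.update θ q c p) = ∑ p, L p (θ p) + (L q c - L q (θ q)) := by
  rw [← Finset.add_sum_erase Finset.univ (fun p => L p (θ p)) (Finset.mem_univ q),
    ← Finset.add_sum_erase Finset.univ (fun p => L p (Function.update θ q c p))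
      (Finset.mem_univ q)]
  have h : ∑ p ∈ Finset.univ.erase q, L p (Function.update θ q c p)
      = ∑ p ∈ Finset.univ.erase q, L p (θ p) :=
    Finset.sum_congr rfl fun p hp => by
      rw [Function.update_of_ne (Finset.ne_of_mem_erase hp)]
  rw [h, Function.update_self]
  ring

/-- The greedy step: adding a slot where the marginal cost is smallest preserves optimality for
the budget increased by one. -/
lemma optimal_add_slot {P : ℕ} {L : Fin P → ℤ → ℝ}
    (hdec : ∀ p (m : ℤ), L p (m + 1) < L p m)
    (hconv : ∀ p, StrictMono fun m : ℤ => L p (m + 1) - L p m)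
    {B : ℤ} {θ : Fin P → ℤ} (hθ : IsOptimalAlloc L B θ) {q : Fin P}
    (hq : ∀ p, L q (θ q + 1) - L q (θ q) ≤ L p (θ p + 1) - L p (θ p)) :
    IsOptimalAlloc L (B + 1) (Function.update θ q (θ q + 1)) := by
  obtain ⟨⟨hpos, hsum⟩, hopt⟩ := hθ
  refine ⟨⟨fun p => ?_, ?_⟩, fun φ hφpos hφsum => ?_⟩
  · rcases eq_or_ne p q with rfl | hne
    · rw [Function.update_self]
      linarith [hpos p]
    · rw [Function.update_of_ne hne]
      exact hpos p
  · rw [sum_update_slot]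
    linarith
  rw [sum_cost_update_slot]
  by_cases hex : ∃ p, θ p < φ p
  · obtain ⟨p, hp⟩ := hex
    have hremove : ∑ r, L r (θ r) ≤ ∑ r, L r (Function.update φ p (φ p - 1) r) := by
      refine hopt _ (fun r => ?_) ?_
      · rcases eq_or_ne r p with rfl | hne
        · rw [Function.update_self]
          have := hpos r
          omega
        · rw [Function.update_of_ne hne]
          exact hφpos r
      · rw [sum_update_slot]
        linarith
    rw [sum_cost_update_slot] at hremove
    have hmarg := (hconv p).monotone (show θ p ≤ φ p - 1 by omega)
    simp only [sub_add_cancel] at hmarg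
    linarith [hq p]
  · push Not at hex
    have hle : ∑ p, L p (θ p) ≤ ∑ p, L p (φ p) :=
      Finset.sum_le_sum fun p _ => antitone_int_of_succ_le (fun m => (hdec p m).le) (hex p)
    linarith [hdec q (θ q)]

lemma exists_optimal_above {P : ℕ} (hP : 1 ≤ P) {L : Fin P → ℤ → ℝ}
    (hdec : ∀ p (m : ℤ), L p (m + 1) < L p m)
    (hconv : ∀ p, StrictMono fun m : ℤ => L p (m + 1) - L p m)
    {B : ℤ} {θ : Fin P → ℤ} (hθ : IsOptimalAlloc L B θ) (n : ℕ) :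
    ∃ ψ : Fin P → ℤ, IsOptimalAlloc L (B + n) ψ ∧ (∀ p, θ p ≤ ψ p) ∧
      ∑ p, ψ p = ∑ p, θ p + n := by
  induction n with
  | zero => exact ⟨θ, by simpa using hθ, fun _ => le_rfl, by simp⟩
  | succ n ih =>
    obtain ⟨ψ, hψ, hle, hsum⟩ := ih
    have : Nonempty (Fin P) := ⟨⟨0, hP⟩⟩
    obtain ⟨q, hq⟩ := Finite.exists_min fun p => L p (ψ p + 1) - L p (ψ p)
    refine ⟨Function.update ψ q (ψ q + 1), ?_, fun p => ?_, ?_⟩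
    · have h := optimal_add_slot hdec hconv hψ hq
      rwa [add_assoc, ← Nat.cast_succ] at h
    · rcases eq_or_ne p q with rfl | hne
      · rw [Function.update_self]
        linarith [hle p]
      · rw [Function.update_of_ne hne]
        exact hle p
    · rw [sum_update_slot, hsum]
      push_cast
      ring

/-- Greedy/incremental structure of the separable simple allocation problem:
if `θ̂` minimizes `∑ L_p(θ_p)` over nonnegative integer allocations of total
at most `K'`, then some optimum `θ^OPT` for budget `K ≥ K'` dominates `θ̂`
componentwise, adds at most `K − K'` slots in total, and hence satisfies
`‖θ^OPT − θ̂‖_∞ ≤ K − K'`. -/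
theorem stmt_17 (P : ℕ) (hP : 1 ≤ P) (L : Fin P → ℤ → ℝ)
    (hdec : ∀ p (m : ℤ), L p (m + 1) < L p m)
    (hconv : ∀ p, StrictMono fun m : ℤ => L p (m + 1) - L p m)
    (K' K : ℤ) (hK'0 : 0 ≤ K') (hK'K : K' ≤ K)
    (θhat : Fin P → ℤ)
    (hhatfeas : (∀ p, 0 ≤ θhat p) ∧ ∑ p, θhat p ≤ K')
    (hhatopt : ∀ θ : Fin P → ℤ, (∀ p, 0 ≤ θ p) → (∑ p, θ p ≤ K') →
      ∑ p, L p (θhat p) ≤ ∑ p, L p (θ p)) :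
    ∃ θopt : Fin P → ℤ,
      ((∀ p, 0 ≤ θopt p) ∧ ∑ p, θopt p ≤ K) ∧
      (∀ θ : Fin P → ℤ, (∀ p, 0 ≤ θ p) → (∑ p, θ p ≤ K) →
        ∑ p, L p (θopt p) ≤ ∑ p, L p (θ p)) ∧
      (∀ p, θhat p ≤ θopt p) ∧
      (∑ p, (θopt p - θhat p) ≤ K - K') ∧
      (∀ p, |θopt p - θhat p| ≤ K - K') := by
  obtain ⟨n, hn⟩ := Int.eq_ofNat_of_zero_le (sub_nonneg.mpr hK'K)
  obtain ⟨ψ, hψ, hle, hsum⟩ :=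
    exists_optimal_above hP hdec hconv (B := K') (θ := θhat) ⟨hhatfeas, hhatopt⟩ n
  have hB : K' + n = K := by omega
  rw [hB] at hψ
  have htotal : ∑ p, (ψ p - θhat p) ≤ K - K' := by
    rw [Finset.sum_sub_distrib, hsum]
    omega
  refine ⟨ψ, hψ.1, hψ.2, hle, htotal, fun p => ?_⟩
  rw [abs_of_nonneg (sub_nonneg.mpr (hle p))]
  exact (Finset.single_le_sum (f := fun p => ψ p - θhat p)
    (fun r _ => sub_nonneg.mpr (hle r)) (Finset.mem_univ p)).trans htotal
end

section
/- Let P be a positive even integer and K an integer with K ≥ P/2, and set K' := K − P/2. For p = 1, …, P let L_p : ℤ → ℝ be decreasing and strictly convex in the discrete sense, and let L̄_p : ℝ → ℝ be continuous strictly convex functions with L̄_p(m) = L_p(m) for all m ∈ ℤ. Let θ* be the unique minimizer of L̄(θ) := ∑_{p=1}^P L̄_p(θ_p) over S := {θ ∈ ℝ^P : θ_p ≥ 0 for all p, ∑_{p=1}^P θ_p = K'}. Then there exists θ^OPT ∈ ℤ^P minimizing ∑_{p=1}^P L_p(θ_p) over {θ ∈ ℤ^P : θ_p ≥ 0 for all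 p, ∑_{p=1}^P θ_p ≤ K} such that ‖θ* − θ^OPT‖_∞ ≤ (3/2)·P. -/
/-!
The argument is an exchange argument. Let `y` be any integer optimum and `x = θ*`; since every
`L p` is decreasing, `y` uses the whole budget, so `∑ (y - x) = P / 2`.

There cannot be `p, q` with `y p + 1 ≤ x p` and `x q ≤ y q - 1`: moving one unit from `q` to `p`
in `y` and one unit from `p` to `q` in `x` are both feasible moves, and by convexity (unit increments
are monotone, `unit_increment_mono`) the two optimality conditions contradict each other.

Hence either `y p > x p - 1` for all `p`, or `y q < x q + 1` for all `q`. As the total discrepancy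
is `P / 2`, a one-sided bound by `1` in every coordinate bounds the other side by
`P / 2 + (P - 1)` in the first case and by `P / 2` in the second
(`sub_le_of_sum_eq` controls one coordinate by the others).
-/

lemma unit_increment_mono {f : ℝ → ℝ} (hf : ConvexOn ℝ Set.univ f) {a b : ℝ} (hab : a ≤ b) :
    f (a + 1) - f a ≤ f (b + 1) - f b := by
  rcases hab.eq_or_lt with rfl | hab
  · exact le_rfl
  -- With `t = 1 / (b + 1 - a)`, the points `a + 1` and `b` are the convex combinations of
  -- `a` and `b + 1` with swapped weights `1 - t` and `t`.
  have hd : 0 < b + 1 - a := by linarith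
  have h1 := hf.2 (Set.mem_univ a) (Set.mem_univ (b + 1))
    (div_nonneg (by linarith) hd.le : 0 ≤ (b - a) / (b + 1 - a))
    (by positivity : 0 ≤ 1 / (b + 1 - a)) (by field_simp; ring)
  have h2 := hf.2 (Set.mem_univ a) (Set.mem_univ (b + 1))
    (by positivity : 0 ≤ 1 / (b + 1 - a))
    (div_nonneg (by linarith) hd.le : 0 ≤ (b - a) / (b + 1 - a)) (by field_simp; ring)
  simp only [smul_eq_mul] at h1 h2
  have e1 : (b - a) / (b + 1 - a) * a + 1 / (b + 1 - a) * (b + 1) = a + 1 := by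
    field_simp; ring
  have e2 : 1 / (b + 1 - a) * a + (b - a) / (b + 1 - a) * (b + 1) = b := by
    field_simp; ring
  rw [e1] at h1
  rw [e2] at h2
  have e3 : (b - a) / (b + 1 - a) = 1 - 1 / (b + 1 - a) := by field_simp; ring
  rw [e3] at h1 h2
  linarith

lemma sum_update_one {ι α M : Type*} [Fintype ι] [DecidableEq ι] [AddCommGroup M]
    (F : ι → α → M) (x : ι → α) (p : ι) (a : α) :
    ∑ i, F i (Function.update x p a i) = ∑ i, F i (x i) + (F p a - F p (x p)) := by
  rw [← sub_eq_iff_eq_add', ← Finset.sum_sub_distrib, Finset.sum_eq_single p]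
  · simp
  · intro i _ hi
    simp [hi]
  · simp

lemma sum_update_two {ι α M : Type*} [Fintype ι] [DecidableEq ι] [AddCommGroup M]
    (F : ι → α → M) (x : ι → α) {p q : ι} (hpq : q ≠ p) (a b : α) :
    ∑ i, F i (Function.update (Function.update x p a) q b i)
      = ∑ i, F i (x i) + (F p a - F p (x p)) + (F q b - F q (x q)) := by
  rw [sum_update_one, sum_update_one, Function.update_of_ne hpq]

/-- If all coordinates are at least `-1`, a single one exceeds the total by at most
the number of the remaining coordinates. -/
lemma sub_le_of_sum_eq {P : ℕ} (d : Fin P → ℝ) (h : ∀ p, -1 ≤ d p) (q : Fin P) :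
    d q ≤ ∑ p, d p + (P - 1) := by
  have h1 : d q + 1 ≤ ∑ p, (d p + 1) :=
    Finset.single_le_sum (f := fun p => d p + 1) (fun p _ => by linarith [h p])
      (Finset.mem_univ q)
  simp only [Finset.sum_add_distrib, Finset.sum_const, Finset.card_univ, Fintype.card_fin,
    nsmul_eq_mul, mul_one] at h1
  linarith

lemma exists_integer_optimum {P : ℕ} (K : ℤ) (hK : 0 ≤ K) (L : Fin P → ℤ → ℝ) :
    ∃ y : Fin P → ℤ, ((∀ p, 0 ≤ y p) ∧ ∑ p, y p ≤ K) ∧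
      ∀ θ : Fin P → ℤ, (∀ p, 0 ≤ θ p) → (∑ p, θ p ≤ K) →
        ∑ p, L p (y p) ≤ ∑ p, L p (θ p) := by
  have hfin : {θ : Fin P → ℤ | (∀ p, 0 ≤ θ p) ∧ ∑ p, θ p ≤ K}.Finite := by
    refine (Set.finite_Icc (0 : Fin P → ℤ) (fun _ => K)).subset ?_
    rintro θ ⟨h0, hs⟩
    exact ⟨h0, fun p => (Finset.single_le_sum (fun i _ => h0 i) (Finset.mem_univ p)).trans hs⟩
  obtain ⟨y, hy, hmin⟩ := Set.exists_min_image _ (fun θ : Fin P → ℤ => ∑ p, L p (θ p)) hfin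
    ⟨0, by simpa using hK⟩
  exact ⟨y, hy, fun θ h0 hs => hmin θ ⟨h0, hs⟩⟩

/-- Optimality gap of SDCP: with `P` even, `K ≥ P/2`, `K' = K − P/2`, miss
intensities `L_p : ℤ → ℝ` decreasing and discretely strictly convex with
continuous strictly convex extensions `L̄_p`, and `θ*` the unique minimizer
of `L̄(θ) = ∑ L̄_p(θ_p)` over the simplex `S = {θ ≥ 0 : ∑ θ_p = K'}`, there is
an integer optimum `θ^OPT` of `∑ L_p(θ_p)` over nonnegative integer
allocations of total at most `K` with `‖θ* − θ^OPT‖_∞ ≤ (3/2)·P`. -/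
theorem stmt_18 (P : ℕ) (hPpos : 0 < P) (hPeven : Even P)
    (K : ℤ) (hK : (P : ℤ) ≤ 2 * K)
    (K' : ℤ) (hK' : 2 * K' = 2 * K - (P : ℤ))
    (L : Fin P → ℤ → ℝ)
    (hdec : ∀ p (m : ℤ), L p (m + 1) < L p m)
    (hconv : ∀ p, StrictMono fun m : ℤ => L p (m + 1) - L p m)
    (Lbar : Fin P → ℝ → ℝ)
    (hcont : ∀ p, Continuous (Lbar p))
    (hbconv : ∀ p, StrictConvexOn ℝ Set.univ (Lbar p))
    (hext : ∀ p (m : ℤ), Lbar p (m : ℝ) = L p m)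
    (S : Set (Fin P → ℝ))
    (hS : S = {θ : Fin P → ℝ | (∀ p, 0 ≤ θ p) ∧ ∑ p, θ p = (K' : ℝ)})
    (θstar : Fin P → ℝ)
    (hθstarS : θstar ∈ S)
    (hθstaropt : ∀ θ ∈ S, θ ≠ θstar →
      ∑ p, Lbar p (θstar p) < ∑ p, Lbar p (θ p)) :
    ∃ θopt : Fin P → ℤ,
      ((∀ p, 0 ≤ θopt p) ∧ ∑ p, θopt p ≤ K) ∧
      (∀ θ : Fin P → ℤ, (∀ p, 0 ≤ θ p) → (∑ p, θ p ≤ K) →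
        ∑ p, L p (θopt p) ≤ ∑ p, L p (θ p)) ∧
      (∀ p, |θstar p - (θopt p : ℝ)| ≤ (3 / 2) * (P : ℝ)) := by
  subst hS
  obtain ⟨hx0, hxs⟩ := hθstarS
  obtain ⟨y, ⟨hy0, hys⟩, hmin⟩ := exists_integer_optimum K (by omega) L
  refine ⟨y, ⟨hy0, hys⟩, hmin, ?_⟩
  have hysum : ∑ p, y p = K := by
    by_contra hne
    have hlt : ∑ p, y p < K := lt_of_le_of_ne hys hne
    let p0 : Fin P := ⟨0, hPpos⟩
    have h := hmin (Function.update y p0 (y p0 + 1))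
      (fun i => by
        rcases eq_or_ne i p0 with rfl | hi
        · rw [Function.update_self]; linarith [hy0 p0]
        · rw [Function.update_of_ne hi]; exact hy0 i)
      (by
        rw [sum_update_one (fun _ m => m)]
        linarith)
    rw [sum_update_one L] at h
    linarith [hdec p0 (y p0)]
  have hexch : ∀ p q, ((y p : ℝ) + 1 ≤ θstar p) → θstar q ≤ (y q : ℝ) - 1 → False := by
    intro p q hp hq
    have hqp : q ≠ p := by
      rintro rfl
      linarith
    have hyp : (0 : ℝ) ≤ y p := by exact_mod_cast hy0 p
    have hyq : 1 ≤ y q := by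
      have : (1 : ℝ) ≤ y q := by linarith [hx0 q]
      exact_mod_cast this
    -- Moving one unit from `q` to `p` does not improve the integer optimum.
    have hY := hmin (Function.update (Function.update y p (y p + 1)) q (y q - 1))
      (fun i => by
        rcases eq_or_ne i q with rfl | hi
        · rw [Function.update_self]; linarith
        rw [Function.update_of_ne hi]
        rcases eq_or_ne i p with rfl | hi'
        · rw [Function.update_self]; linarith [hy0 i]
        · rw [Function.update_of_ne hi']; exact hy0 i)
      (by
        rw [sum_update_two (fun _ m => m) y hqp]
        linarith)
    rw [sum_update_two L y hqp] at hY
    -- Moving one unit from `p` to `q` strictly worsens the continuous optimum.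
    have hX := hθstaropt
      (Function.update (Function.update θstar p (θstar p - 1)) q (θstar q + 1))
      ⟨fun i => by
        rcases eq_or_ne i q with rfl | hi
        · rw [Function.update_self]; linarith [hx0 i]
        rw [Function.update_of_ne hi]
        rcases eq_or_ne i p with rfl | hi'
        · rw [Function.update_self]; linarith
        · rw [Function.update_of_ne hi']; exact hx0 i,
       by
        rw [sum_update_two (fun _ m => m) θstar hqp]
        linarith⟩
      (fun h => by
        have := congrFun h q
        rw [Function.update_self] at this
        linarith)
    rw [sum_update_two Lbar θstar hqp] at hX
    have hcp := unit_increment_mono (hbconv p).convexOn (a := (y p : ℝ)) (b := θstar p - 1)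
      (by linarith)
    have hcq := unit_increment_mono (hbconv q).convexOn (a := θstar q) (b := (y q : ℝ) - 1) hq
    have e1 := hext p (y p)
    have e2 := hext p (y p + 1)
    have e3 := hext q (y q)
    have e4 := hext q (y q - 1)
    push_cast at e2 e4
    rw [sub_add_cancel, e1, e2] at hcp
    rw [sub_add_cancel, e3, e4] at hcq
    linarith
  have hP1 : (1 : ℝ) ≤ P := by exact_mod_cast hPpos
  have hKR : 2 * (K' : ℝ) = 2 * K - P := by exact_mod_cast hK'
  have hysR : ∑ p, (y p : ℝ) = K := by exact_mod_cast hysum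
  have hdiff : ∑ p, ((y p : ℝ) - θstar p) = P / 2 := by
    rw [Finset.sum_sub_distrib, hysR, hxs]
    linarith
  have hdiff' : ∑ p, (θstar p - (y p : ℝ)) = -(P / 2) := by
    rw [Finset.sum_sub_distrib, hysR, hxs]
    linarith
  by_cases hA : ∀ p, -1 ≤ (y p : ℝ) - θstar p
  · intro q
    have h1 := sub_le_of_sum_eq _ hA q
    rw [hdiff] at h1
    rw [abs_le]
    constructor <;> linarith [hA q]
  · push Not at hA
    obtain ⟨p, hp⟩ := hA
    have hB : ∀ q, -1 ≤ θstar q - (y q : ℝ) := by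
      intro q
      by_contra hq
      exact hexch p q (by linarith) (by linarith)
    intro q
    have h1 := sub_le_of_sum_eq _ hB q
    rw [hdiff'] at h1
    rw [abs_le]
    constructor <;> linarith [hB q]
end
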